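/- arXiv:1603.06069 — 4 statements merged into one kernel-verified Lean document; each statement's English description precedes it below -/
import Mathlib

section
/- For every 1 ≤ k ≤ n, the weight λ_{n+k,2n}^{(1)} is nonzero with sign (−1)^{k−1}, and the weight λ_{k,2n}^{(2)} is nonzero with sign (−1)^{n−k}. In particular, the weights of the first quadrature rule at the nodes lying in [a₂,b₂] alternate in sign, as do the weights of the second quadrature rule at the nodes lying in [a₁,b₁]. -/
open MeasureTheory

/-- The data of the diagonal type II multiple orthogonal polynomial for an
Angelesco system with two intervals: its `2n` zeros, listed in increasing
order, with `n` of them in `(a₁,b₁)` and `n` of them in `(a₂,b₂)`, and the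
multiple orthogonality conditions. -/
structure Angelesco (μ₁ μ₂ : Measure ℝ) (a₁ b₁ a₂ b₂ : ℝ) (n : ℕ) where
  x : Fin (2 * n) → ℝ
  mono : StrictMono x
  mem1 : ∀ i : Fin (2 * n), (i : ℕ) < n → x i ∈ Set.Ioo a₁ b₁
  mem2 : ∀ i : Fin (2 * n), n ≤ (i : ℕ) → x i ∈ Set.Ioo a₂ b₂
  orth1 : ∀ k < n, ∫ t, (∏ i, (t - x i)) * t ^ k ∂μ₁ = 0
  orth2 : ∀ k < n, ∫ t, (∏ i, (t - x i)) * t ^ k ∂μ₂ = 0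

/-- The quadrature weight `λ_{k,2n}^{(μ)} = ∫ ℓ_{k,2n} dμ`, where `ℓ_{k,2n}` is the
`k`-th fundamental Lagrange polynomial for the nodes `x_{1,2n} < ⋯ < x_{2n,2n}`. -/
noncomputable def qweight {μ₁ μ₂ : Measure ℝ} {a₁ b₁ a₂ b₂ : ℝ} {n : ℕ}
    (ad : Angelesco μ₁ μ₂ a₁ b₁ a₂ b₂ n) (μ : Measure ℝ) (k : Fin (2 * n)) : ℝ :=
  ∫ t, (Lagrange.basis Finset.univ ad.x k).eval t ∂μ

open Polynomial in
lemma aux_integrable (μ : Measure ℝ) (hmom : ∀ k : ℕ, Integrable (fun t : ℝ => t ^ k) μ)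
    (p : ℝ[X]) : Integrable (fun t => p.eval t) μ := by
  simp only [Polynomial.eval_eq_sum_range]
  exact integrable_finsetSum _ (fun i _ => (hmom i).const_mul _)

open Polynomial in
lemma aux_orth (μ : Measure ℝ) (hmom : ∀ k : ℕ, Integrable (fun t : ℝ => t ^ k) μ)
    (P R : ℝ[X]) (N : ℕ) (horth : ∀ k < N, ∫ t, P.eval t * t ^ k ∂μ = 0)
    (hR : R.degree < N) : ∫ t, (P * R).eval t ∂μ = 0 := by
  have h : ∀ t, (P * R).eval t = ∑ k ∈ Finset.range N, R.coeff k * (P.eval t * t ^ k) := by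
    intro t
    have h2 : R.eval t = ∑ k ∈ Finset.range N, R.coeff k * t ^ k := by
      by_cases hR0 : R = 0
      · simp [hR0]
      · exact Polynomial.eval_eq_sum_range' ((Polynomial.natDegree_lt_iff_degree_lt hR0).2 hR) t
    rw [Polynomial.eval_mul, h2, Finset.mul_sum]
    exact Finset.sum_congr rfl fun k _ => by ring
  simp only [h]
  rw [integral_finsetSum]
  · refine Finset.sum_eq_zero fun k hk => ?_
    rw [integral_const_mul, horth k (Finset.mem_range.1 hk), mul_zero]
  · intro k _
    have := aux_integrable μ hmom (P * X ^ k)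
    simp only [Polynomial.eval_mul, Polynomial.eval_pow, Polynomial.eval_X] at this
    exact this.const_mul _

open Polynomial in
lemma aux_core (μ : Measure ℝ) (hmom : ∀ k : ℕ, Integrable (fun t : ℝ => t ^ k) μ)
    (hinf : ∀ s : Finset ℝ, μ ((s : Set ℝ))ᶜ ≠ 0)
    (m : ℕ) (x : Fin m → ℝ) (hx : Function.Injective x) (S : Finset (Fin m)) (j : Fin m)
    (hj : j ∉ S) (horth : ∀ k < S.card, ∫ t, (∏ i, (t - x i)) * t ^ k ∂μ = 0)
    (ε : ℝ) (K : Set ℝ) (hK : μ Kᶜ = 0)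
    (hpos : ∀ t ∈ K, 0 < ε * ∏ i ∈ Sᶜ.erase j, ((x j - x i)⁻¹ * (t - x i))) :
    0 < ε * ∫ t, (Lagrange.basis Finset.univ x j).eval t ∂μ := by
  set A : ℝ[X] := ∏ i ∈ S, Lagrange.basisDivisor (x j) (x i) with hA
  set B : ℝ[X] := ∏ i ∈ Sᶜ.erase j, Lagrange.basisDivisor (x j) (x i) with hB
  have hbasis : Lagrange.basis Finset.univ x j = A * B := by
    rw [Lagrange.basis, hA, hB, ← Finset.prod_union]
    · congr 1
      ext i
      simp only [Finset.mem_erase, Finset.mem_union, Finset.mem_compl, Finset.mem_univ]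
      by_cases h : i ∈ S
      · have : i ≠ j := fun h' => hj (h' ▸ h)
        simp [h, this]
      · simp [h]
    · rw [Finset.disjoint_left]
      intro i hi
      simp [hi]
  have hne : ∀ i ∈ S, x j ≠ x i := fun i hi h => hj (hx h ▸ hi)
  have hA1 : A.eval (x j) = 1 := by
    rw [hA, Polynomial.eval_prod]
    exact Finset.prod_eq_one fun i hi => Lagrange.eval_basisDivisor_left_of_ne (hne i hi)
  have hAdeg : A.degree = S.card := by
    rw [hA, Polynomial.degree_prod, Finset.sum_congr rfl
      (fun i hi => Lagrange.degree_basisDivisor_of_ne (hne i hi))]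
    simp
  obtain ⟨R, hR⟩ : (X - C (x j)) ∣ A - 1 := by
    rw [Polynomial.dvd_iff_isRoot]; simp [hA1]
  have hRdeg : R.degree < S.card := by
    by_cases hR0 : R = 0
    · rw [hR0, Polynomial.degree_zero]; exact WithBot.bot_lt_coe _
    have h1 : (A - 1).degree ≤ S.card := by
      refine (Polynomial.degree_sub_le _ _).trans (max_le hAdeg.le ?_)
      rw [Polynomial.degree_one]; exact_mod_cast Nat.zero_le _
    rw [hR, Polynomial.degree_mul, Polynomial.degree_X_sub_C,
      Polynomial.degree_eq_natDegree hR0] at h1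
    rw [Polynomial.degree_eq_natDegree hR0]
    have h2 : 1 + R.natDegree ≤ S.card := by exact_mod_cast h1
    exact_mod_cast (by omega : R.natDegree < S.card)
  have hprod : ∃ c : ℝ, A * B * (X - C (x j)) = C c * ∏ i, (X - C (x i)) := by
    refine ⟨∏ i ∈ Finset.univ.erase j, (x j - x i)⁻¹, ?_⟩
    rw [← hbasis, Lagrange.basis, ← Finset.prod_erase_mul Finset.univ _ (Finset.mem_univ j),
      ← mul_assoc, map_prod, ← Finset.prod_mul_distrib]
    rfl
  obtain ⟨c, hc⟩ := hprod
  have hz : ∫ t, ((∏ i, (X - C (x i))) * (C c * R)).eval t ∂μ = 0 := by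
    refine aux_orth μ hmom _ _ S.card ?_ ?_
    · intro k hk
      simpa [Polynomial.eval_prod] using horth k hk
    · refine lt_of_le_of_lt ?_ hRdeg
      rw [← Polynomial.smul_eq_C_mul]
      exact Polynomial.degree_smul_le c R
  have hpoly : A * B = A ^ 2 * B - (∏ i, (X - C (x i))) * (C c * R) := by
    have : (∏ i, (X - C (x i))) * (C c * R) = A * B * (A - 1) := by
      rw [hR, ← mul_assoc, ← mul_assoc, hc]; ring
    rw [this]; ring
  have hint : ∫ t, (Lagrange.basis Finset.univ x j).eval t ∂μ = ∫ t, (A ^ 2 * B).eval t ∂μ := by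
    rw [hbasis, hpoly]
    simp only [Polynomial.eval_sub]
    rw [integral_sub (aux_integrable μ hmom _) (aux_integrable μ hmom _), hz, sub_zero]
  rw [hint, ← integral_const_mul]
  have hBe : ∀ t, B.eval t = ∏ i ∈ Sᶜ.erase j, ((x j - x i)⁻¹ * (t - x i)) := by
    intro t
    rw [hB, Polynomial.eval_prod]
    simp [Lagrange.basisDivisor]
  have hKae : ∀ᵐ t ∂μ, t ∈ K := hK
  have hA0 : A ≠ 0 := by rintro h; simp [h] at hA1
  rw [integral_pos_iff_support_of_nonneg_ae]
  · rw [pos_iff_ne_zero]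
    intro h0
    apply hinf A.roots.toFinset
    refine measure_mono_null ?_ (measure_union_null h0 hK)
    intro t ht
    by_cases htK : t ∈ K
    · left
      have h1 := hpos t htK
      rw [← hBe] at h1
      have h2 : A.eval t ≠ 0 := by
        intro h; apply ht; simp [hA0, h]
      rw [Function.mem_support, Polynomial.eval_mul, Polynomial.eval_pow]
      have : 0 < (A.eval t) ^ 2 := by positivity
      have := mul_pos this h1
      intro h; nlinarith
    · right; exact htK
  · filter_upwards [hKae] with t ht
    have h1 := hpos t ht
    rw [← hBe] at h1
    simp only [Polynomial.eval_mul, Polynomial.eval_pow, Pi.zero_apply]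
    have := mul_nonneg (sq_nonneg (A.eval t)) h1.le
    nlinarith
  · exact (aux_integrable μ hmom _).const_mul _

lemma aux_sign {ι : Type*} (T : Finset ι) (p : ι → Prop) [DecidablePred p] (f : ι → ℝ)
    (h1 : ∀ i ∈ T, p i → f i < 0) (h2 : ∀ i ∈ T, ¬ p i → 0 < f i) :
    0 < (-1 : ℝ) ^ (T.filter p).card * ∏ i ∈ T, f i := by
  rw [← Finset.prod_const, Finset.prod_filter, ← Finset.prod_mul_distrib]
  refine Finset.prod_pos fun i hi => ?_
  by_cases h : p i
  · have := h1 i hi h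
    simp [h, this]
  · simpa [h] using h2 i hi h

lemma aux_fin (e : ℕ) (w : ℝ) (h : 0 < (-1 : ℝ) ^ e * w) :
    (Even e → 0 < w) ∧ (¬ Even e → w < 0) := by
  constructor
  · intro he; simpa [he.neg_one_pow] using h
  · intro he
    rw [(Nat.not_even_iff_odd.1 he).neg_one_pow] at h
    linarith

/-- **Alternating signs of the quadrature weights on the other interval.**
For `1 ≤ k ≤ n`, the weight `λ_{n+k,2n}^{(1)}` is nonzero with sign `(−1)^{k−1}`, and
the weight `λ_{k,2n}^{(2)}` is nonzero with sign `(−1)^{n−k}`.  (Here nodes are indexed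
by `i : Fin (2n)`, so the node `x_{n+k,2n}` corresponds to `i` with `i ≥ n` and
`k − 1 = i − n`, and the node `x_{k,2n}` to `i` with `i < n` and `n − k = n − 1 − i`.) -/
theorem angelesco_weights_alternating
    (μ₁ μ₂ : Measure ℝ) [IsFiniteMeasure μ₁] [IsFiniteMeasure μ₂]
    (a₁ b₁ a₂ b₂ : ℝ) (hab₁ : a₁ < b₁) (hgap : b₁ ≤ a₂) (hab₂ : a₂ < b₂)
    (hsupp₁ : μ₁ (Set.Icc a₁ b₁)ᶜ = 0) (hsupp₂ : μ₂ (Set.Icc a₂ b₂)ᶜ = 0)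
    (hinf₁ : ∀ s : Finset ℝ, μ₁ ((s : Set ℝ))ᶜ ≠ 0)
    (hinf₂ : ∀ s : Finset ℝ, μ₂ ((s : Set ℝ))ᶜ ≠ 0)
    (hmom₁ : ∀ k : ℕ, Integrable (fun t : ℝ => t ^ k) μ₁)
    (hmom₂ : ∀ k : ℕ, Integrable (fun t : ℝ => t ^ k) μ₂)
    (n : ℕ) (hn : 1 ≤ n) (ad : Angelesco μ₁ μ₂ a₁ b₁ a₂ b₂ n) :
    (∀ i : Fin (2 * n), n ≤ (i : ℕ) →
      (Even ((i : ℕ) - n) → 0 < qweight ad μ₁ i) ∧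
      (¬ Even ((i : ℕ) - n) → qweight ad μ₁ i < 0)) ∧
    (∀ i : Fin (2 * n), (i : ℕ) < n →
      (Even (n - 1 - (i : ℕ)) → 0 < qweight ad μ₂ i) ∧
      (¬ Even (n - 1 - (i : ℕ)) → qweight ad μ₂ i < 0)) := by
  constructor
  · intro i hi
    apply aux_fin
    have hcard : (Finset.univ.filter (fun k : Fin (2 * n) => (k : ℕ) < n)).card = n := by
      rw [Fin.card_filter_val_lt]
      omega
    refine aux_core μ₁ hmom₁ hinf₁ (2 * n) ad.x ad.mono.injective
      (Finset.univ.filter (fun k : Fin (2 * n) => (k : ℕ) < n)) i (by simpa using hi)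
      (by rw [hcard]; exact ad.orth1) _ (Set.Icc a₁ b₁) hsupp₁ ?_
    intro t ht
    have hc : ((((Finset.univ.filter (fun k : Fin (2 * n) => (k : ℕ) < n))ᶜ).erase i).filter
        (fun k => k < i)).card = (i : ℕ) - n := by
      rw [show ((((Finset.univ.filter (fun k : Fin (2 * n) => (k : ℕ) < n))ᶜ).erase i).filter
        (fun k => k < i)) = Finset.Ico (⟨n, by omega⟩ : Fin (2 * n)) i from ?_]
      · simp
      · ext k
        simp only [Finset.mem_Ico, ne_eq, Finset.mem_filter, Finset.mem_erase, Finset.mem_compl, Finset.mem_univ, true_and, Fin.lt_def, Fin.le_def, Fin.ext_iff]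
        omega
    rw [← hc]
    have hn : ∀ k ∈ (((Finset.univ.filter (fun k : Fin (2 * n) => (k : ℕ) < n))ᶜ).erase i),
        k ≠ i ∧ t - ad.x k < 0 := by
      intro k hk
      simp at hk
      have := (ad.mem2 k hk.2).1
      have := ht.2
      exact ⟨hk.1, by linarith⟩
    refine aux_sign _ _ _ ?_ ?_
    · intro k hk hki
      exact mul_neg_of_pos_of_neg (inv_pos.2 (sub_pos.2 (ad.mono hki))) (hn k hk).2
    · intro k hk hki
      have hlt : i < k := lt_of_le_of_ne (not_lt.1 hki) (hn k hk).1.symm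
      exact mul_pos_of_neg_of_neg (inv_lt_zero.2 (sub_neg.2 (ad.mono hlt))) (hn k hk).2
  · intro i hi
    apply aux_fin
    have hcard : (Finset.univ.filter (fun k : Fin (2 * n) => n ≤ (k : ℕ))).card = n := by
      have h := Finset.card_filter_add_card_filter_not (s := (Finset.univ : Finset (Fin (2 * n))))
        (fun k : Fin (2 * n) => (k : ℕ) < n)
      rw [Fin.card_filter_val_lt] at h
      simp only [not_lt, Finset.card_univ, Fintype.card_fin] at h
      omega
    refine aux_core μ₂ hmom₂ hinf₂ (2 * n) ad.x ad.mono.injective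
      (Finset.univ.filter (fun k : Fin (2 * n) => n ≤ (k : ℕ))) i (by simpa using hi)
      (by rw [hcard]; exact ad.orth2) _ (Set.Icc a₂ b₂) hsupp₂ ?_
    intro t ht
    have hc : ((((Finset.univ.filter (fun k : Fin (2 * n) => n ≤ (k : ℕ)))ᶜ).erase i).filter
        (fun k => i < k)).card = n - 1 - (i : ℕ) := by
      rw [show ((((Finset.univ.filter (fun k : Fin (2 * n) => n ≤ (k : ℕ)))ᶜ).erase i).filter
        (fun k => i < k)) = Finset.Ioo i (⟨n, by omega⟩ : Fin (2 * n)) from ?_]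
      · simp; omega
      · ext k
        simp only [Finset.mem_Ioo, ne_eq, Finset.mem_filter, Finset.mem_erase, Finset.mem_compl, Finset.mem_univ, true_and, Fin.lt_def, Fin.ext_iff]
        omega
    rw [← hc]
    have hn : ∀ k ∈ (((Finset.univ.filter (fun k : Fin (2 * n) => n ≤ (k : ℕ)))ᶜ).erase i),
        k ≠ i ∧ 0 < t - ad.x k := by
      intro k hk
      simp at hk
      have := (ad.mem1 k hk.2).2
      have := ht.1
      exact ⟨hk.1, by linarith⟩
    refine aux_sign _ _ _ ?_ ?_
    · intro k hk hki
      exact mul_neg_of_neg_of_pos (inv_lt_zero.2 (sub_neg.2 (ad.mono hki))) (hn k hk).2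
    · intro k hk hki
      have hlt : k < i := lt_of_le_of_ne (not_lt.1 hki) (hn k hk).1
      exact mul_pos (inv_pos.2 (sub_pos.2 (ad.mono hlt))) (hn k hk).2
end

section
/- For every n ≥ 3 and every 2 ≤ ℓ ≤ n − 1, one has λ_{ℓ,2n}^{(1)} ≤ μ₁([x_{ℓ−1,2n}, x_{ℓ+1,2n}]). -/
open MeasureTheory

open Polynomial in
lemma ang_key {ι : Type*} (A Y : Finset ι) (s : ι → ℝ) (p m : ℝ) (hp : 0 < p) (hm : m < 0) :
    ∃ γ δ : ℝ, ∀ t : ℝ, (∀ k ∈ Y, 0 ≤ 1 + s k * t) →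
      ((0 ≤ 1 + p * t → 0 ≤ 1 + m * t → (∀ k ∈ A, 0 ≤ 1 + s k * t) →
        ((1 + p * t) * (1 + m * t) * ((1 + γ * t) * (1 + δ * t))) *
          ((∏ k ∈ A, (1 + s k * t)) ^ 2 * ∏ k ∈ Y, (1 + s k * t)) ≤ 1) ∧
      ((1 + p * t < 0 ∨ 1 + m * t < 0) →
        ((1 + p * t) * (1 + m * t) * ((1 + γ * t) * (1 + δ * t))) *
          ((∏ k ∈ A, (1 + s k * t)) ^ 2 * ∏ k ∈ Y, (1 + s k * t)) ≤ 0)) := by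
  set E : ℝ := -(2 * ∑ k ∈ A, s k + ∑ k ∈ Y, s k + p + m) with hE
  have main : ∃ γ δ : ℝ, γ + δ = E ∧ ∀ t : ℝ,
      ((0 ≤ 1 + p * t → 0 ≤ 1 + m * t → (0 ≤ 1 + γ * t ∧ 0 ≤ 1 + δ * t) ∨
        (1 + γ * t) * (1 + δ * t) ≤ 0) ∧
      ((1 + p * t < 0 ∨ 1 + m * t < 0) →
        (1 + p * t) * (1 + m * t) * ((1 + γ * t) * (1 + δ * t)) ≤ 0)) := by
    have hprod : ∀ t : ℝ, (1 + p * t < 0 ∨ 1 + m * t < 0) → (1 + p * t) * (1 + m * t) ≤ 0 := by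
      rintro t (h | h)
      · have : t < 0 := by nlinarith
        have : 0 < 1 + m * t := by nlinarith
        nlinarith
      · have : 0 < t := by nlinarith
        have : 0 < 1 + p * t := by nlinarith
        nlinarith
    by_cases h1 : 2 * p < E
    · refine ⟨p, E - p, by ring, fun t => ⟨fun ha hb => ?_, ?_⟩⟩
      · rcases le_total 0 (1 + (E - p) * t) with h | h
        · exact Or.inl ⟨ha, h⟩
        · exact Or.inr (mul_nonpos_of_nonneg_of_nonpos ha h)
      · intro h
        have : (1 + m * t) * (1 + (E - p) * t) ≤ 0 := by
          rcases h with h | h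
          · have h3 : t < 0 := by nlinarith
            have : 0 < 1 + m * t := by nlinarith
            have : 1 + (E - p) * t < 0 := by nlinarith
            nlinarith
          · have : 0 < t := by nlinarith
            have : 0 < 1 + (E - p) * t := by nlinarith
            nlinarith
        nlinarith [sq_nonneg (1 + p * t), mul_nonneg (sq_nonneg (1 + p * t)) (neg_nonneg.2 this)]
    · by_cases h2 : E < 2 * m
      · refine ⟨m, E - m, by ring, fun t => ⟨fun ha hb => ?_, ?_⟩⟩
        · rcases le_total 0 (1 + (E - m) * t) with h | h
          · exact Or.inl ⟨hb, h⟩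
          · exact Or.inr (mul_nonpos_of_nonneg_of_nonpos hb h)
        · intro h
          have : (1 + p * t) * (1 + (E - m) * t) ≤ 0 := by
            rcases h with h | h
            · have h3 : t < 0 := by nlinarith
              have : 0 < 1 + (E - m) * t := by nlinarith
              nlinarith
            · have : 0 < t := by nlinarith
              have : 0 < 1 + p * t := by nlinarith
              have : 1 + (E - m) * t < 0 := by nlinarith
              nlinarith
          nlinarith [mul_nonneg (sq_nonneg (1 + m * t)) (neg_nonneg.2 this)]
      · push Not at h1 h2
        refine ⟨E / 2, E / 2, by ring, fun t => ⟨fun ha hb => ?_, fun h => ?_⟩⟩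
        · left
          have : 0 ≤ 1 + E / 2 * t := by
            rcases le_total 0 t with h | h <;> nlinarith
          exact ⟨this, this⟩
        · exact mul_nonpos_of_nonpos_of_nonneg (hprod t h) (mul_self_nonneg _)
  obtain ⟨γ, δ, hs, H⟩ := main
  refine ⟨γ, δ, fun t hY => ⟨fun ha hb hA => ?_, fun h => ?_⟩⟩
  · have hYp := Finset.prod_nonneg hY
    have hAp := Finset.prod_nonneg hA
    rcases (H t).1 ha hb with ⟨h1, h2⟩ | h
    · have bd : ∀ u : ℝ, 1 + u * t ≤ Real.exp (u * t) := fun u => by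
        have := Real.add_one_le_exp (u * t); linarith
      have bA : ∏ k ∈ A, (1 + s k * t) ≤ Real.exp ((∑ k ∈ A, s k) * t) := by
        rw [Finset.sum_mul, Real.exp_sum]
        exact Finset.prod_le_prod hA fun k _ => bd _
      have bY : ∏ k ∈ Y, (1 + s k * t) ≤ Real.exp ((∑ k ∈ Y, s k) * t) := by
        rw [Finset.sum_mul, Real.exp_sum]
        exact Finset.prod_le_prod hY fun k _ => bd _
      calc _ ≤ ((Real.exp (p * t)) * (Real.exp (m * t)) *
            ((Real.exp (γ * t)) * (Real.exp (δ * t)))) *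
          ((Real.exp ((∑ k ∈ A, s k) * t)) ^ 2 * Real.exp ((∑ k ∈ Y, s k) * t)) := by
            gcongr <;> exact bd _
        _ = 1 := by
            rw [sq, ← Real.exp_add, ← Real.exp_add, ← Real.exp_add, ← Real.exp_add,
              ← Real.exp_add, ← Real.exp_add, Real.exp_eq_one_iff]
            linear_combination t * hs + t * hE
    · refine le_trans (mul_nonpos_of_nonpos_of_nonneg ?_ (by positivity)) zero_le_one
      exact mul_nonpos_of_nonneg_of_nonpos (mul_nonneg ha hb) h
  · have hYp := Finset.prod_nonneg hY
    exact mul_nonpos_of_nonpos_of_nonneg ((H t).2 h) (by positivity)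

lemma ang_int (μ : Measure ℝ) (hmom : ∀ k : ℕ, Integrable (fun t : ℝ => t ^ k) μ)
    (p : Polynomial ℝ) : Integrable (fun t => p.eval t) μ := by
  simp_rw [Polynomial.eval_eq_sum_range]
  exact integrable_finsetSum _ fun k _ => (hmom k).const_mul _

lemma ang_orth (μ : Measure ℝ) (hmom : ∀ k : ℕ, Integrable (fun t : ℝ => t ^ k) μ)
    (w r : Polynomial ℝ) (n : ℕ) (ho : ∀ k < n, ∫ t, w.eval t * t ^ k ∂μ = 0)
    (hr : r.natDegree < n) : ∫ t, (w * r).eval t ∂μ = 0 := by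
  have : ∀ t : ℝ, (w * r).eval t = ∑ k ∈ Finset.range n, r.coeff k * (w.eval t * t ^ k) := by
    intro t
    rw [Polynomial.eval_mul, Polynomial.eval_eq_sum_range' hr, Finset.mul_sum]
    exact Finset.sum_congr rfl fun k _ => by ring
  simp_rw [this]
  rw [integral_finsetSum]
  · refine Finset.sum_eq_zero fun k hk => ?_
    rw [integral_const_mul, ho k (Finset.mem_range.1 hk), mul_zero]
  · intro k _
    refine Integrable.const_mul ?_ _
    have := ang_int μ hmom (w * Polynomial.X ^ k)
    simpa using this

/-- **Upper bound for a positive quadrature weight.**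
For `2 ≤ ℓ ≤ n − 1` one has `λ_{ℓ,2n}^{(1)} ≤ μ₁([x_{ℓ−1,2n}, x_{ℓ+1,2n}])`
(nodes are `1`-based, so `x_{ℓ,2n}` is `ad.x ⟨ℓ-1,_⟩`). -/
theorem angelesco_weight_upper_bound
    (μ₁ μ₂ : Measure ℝ) [IsFiniteMeasure μ₁] [IsFiniteMeasure μ₂]
    (a₁ b₁ a₂ b₂ : ℝ) (hab₁ : a₁ < b₁) (hgap : b₁ ≤ a₂) (hab₂ : a₂ < b₂)
    (hsupp₁ : μ₁ (Set.Icc a₁ b₁)ᶜ = 0) (hsupp₂ : μ₂ (Set.Icc a₂ b₂)ᶜ = 0)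
    (hinf₁ : ∀ s : Finset ℝ, μ₁ ((s : Set ℝ))ᶜ ≠ 0)
    (hinf₂ : ∀ s : Finset ℝ, μ₂ ((s : Set ℝ))ᶜ ≠ 0)
    (hmom₁ : ∀ k : ℕ, Integrable (fun t : ℝ => t ^ k) μ₁)
    (hmom₂ : ∀ k : ℕ, Integrable (fun t : ℝ => t ^ k) μ₂)
    (n : ℕ) (hn : 3 ≤ n) (ad : Angelesco μ₁ μ₂ a₁ b₁ a₂ b₂ n)
    (ℓ : ℕ) (hℓ₁ : 2 ≤ ℓ) (hℓ₂ : ℓ ≤ n - 1) :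
    qweight ad μ₁ ⟨ℓ - 1, by omega⟩ ≤
      (μ₁ (Set.Icc (ad.x ⟨ℓ - 2, by omega⟩) (ad.x ⟨ℓ, by omega⟩))).toReal := by
  classical
  set a : Fin (2 * n) := ⟨ℓ - 2, by omega⟩ with ha
  set b : Fin (2 * n) := ⟨ℓ - 1, by omega⟩ with hb
  set c : Fin (2 * n) := ⟨ℓ, by omega⟩ with hc
  have xab : ad.x a < ad.x b := ad.mono (by rw [Fin.lt_def]; simp [ha, hb]; omega)
  have xbc : ad.x b < ad.x c := ad.mono (by rw [Fin.lt_def]; simp [hc, hb]; omega)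
  have hac : a ≠ c := by rintro h; rw [h] at xab; linarith
  have hab' : a ≠ b := by rintro h; rw [h] at xab; linarith
  have hcb' : c ≠ b := by rintro h; rw [h] at xbc; linarith
  set s : Fin (2 * n) → ℝ := fun k => (ad.x b - ad.x k)⁻¹ with hs
  set F : Finset (Fin (2 * n)) := Finset.univ.filter (fun i => (i : ℕ) < n) with hF
  set Y : Finset (Fin (2 * n)) := Finset.univ.filter (fun i => n ≤ (i : ℕ)) with hY
  set A : Finset (Fin (2 * n)) := ((F.erase a).erase b).erase c with hA
  have hFc : F.card ≤ n := by
    have : F.card ≤ (Finset.range n).card :=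
      Finset.card_le_card_of_injOn (fun i => (i : ℕ)) (fun i hi => by simpa [hF] using hi)
        (fun i _ j _ h => Fin.ext h)
    simpa using this
  have hAc : A.card + 3 ≤ n := by
    have h1 : a ∈ F := by simp [hF, ha]; omega
    have h2 : b ∈ F.erase a := by simp [hF, hb, hab'.symm]; omega
    have h3 : c ∈ (F.erase a).erase b := by simp [hF, hc, hcb', hac.symm]; omega
    have e1 := Finset.card_erase_add_one h1
    have e2 := Finset.card_erase_add_one h2
    have e3 := Finset.card_erase_add_one h3
    rw [← hA] at e3
    omega
  have hAY : Disjoint A Y := by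
    rw [Finset.disjoint_left]
    intro i hi hi'
    simp [hA, hF, hY] at hi hi'
    omega
  have hcAY : c ∉ A ∪ Y := by simp [hA, hY, hc]; omega
  have haAY : a ∉ insert c (A ∪ Y) := by simp [hA, hY, hF, hac]; simp [ha]; omega
  have hU : Finset.univ.erase b = insert a (insert c (A ∪ Y)) := by
    ext i
    simp only [Finset.mem_erase, Finset.mem_univ, and_true, Finset.mem_insert, Finset.mem_union,
      hA, hF, hY, Finset.mem_filter, true_and]
    constructor
    · intro h
      by_cases h1 : i = a
      · simp [h1]
      by_cases h2 : i = c
      · simp [h2]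
      rcases lt_or_ge (i : ℕ) n with h3 | h3 <;> tauto
    · rintro (h | h | h | h)
      · rw [h]; exact hab'
      · rw [h]; exact hcb'
      · exact h.2.1
      · rintro rfl; simp [hb] at h; omega
  have hpos : 0 < s a := inv_pos.2 (by linarith)
  have hneg : s c < 0 := inv_lt_zero.2 (by linarith)
  obtain ⟨γ, δ, H⟩ := ang_key A Y s (s a) (s c) hpos hneg
  -- the polynomials
  let f : ℝ → Polynomial ℝ := fun u => 1 + Polynomial.C u * (Polynomial.X - Polynomial.C (ad.x b))
  have fe : ∀ u t, (f u).eval t = 1 + u * (t - ad.x b) := by intro u t; simp [f]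
  have fd : ∀ u, (f u).natDegree ≤ 1 := by
    intro u
    simp only [f]
    compute_degree
  set B := Lagrange.basis Finset.univ ad.x b with hB
  set G : Polynomial ℝ := (∏ k ∈ A, f (s k)) * (f γ * f δ) with hG
  have hGd : G.natDegree ≤ A.card + 2 := by
    have h1 : (∏ k ∈ A, f (s k)).natDegree ≤ A.card := by
      refine (Polynomial.natDegree_prod_le _ _).trans ?_
      refine (Finset.sum_le_card_nsmul _ _ 1 fun k _ => fd _).trans (by simp)
    have h2 : (f γ * f δ).natDegree ≤ 2 := Polynomial.natDegree_mul_le_of_le (fd γ) (fd δ)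
    exact Polynomial.natDegree_mul_le_of_le h1 h2
  have hGb : (G - 1).eval (ad.x b) = 0 := by
    simp [hG, Polynomial.eval_prod, fe]
  obtain ⟨r, hr⟩ := Polynomial.dvd_iff_isRoot.2 hGb
  have hrd : r.natDegree < n := by
    by_cases h0 : r = 0
    · simp [h0]; omega
    have h1 : (G - 1).natDegree ≤ A.card + 2 := by
      refine (Polynomial.natDegree_sub_le _ _).trans ?_
      simp [hGd]
    rw [hr, Polynomial.natDegree_mul (Polynomial.X_sub_C_ne_zero _) h0,
      Polynomial.natDegree_X_sub_C] at h1
    omega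
  have hne : ∀ k, k ≠ b → ad.x b - ad.x k ≠ 0 := fun k hk => by
    rw [sub_ne_zero]; exact fun h => hk (ad.mono.injective h).symm
  have hBe : ∀ t, B.eval t = ∏ k ∈ Finset.univ.erase b, (1 + s k * (t - ad.x b)) := by
    intro t
    rw [hB, Lagrange.basis, Polynomial.eval_prod]
    refine Finset.prod_congr rfl fun k hk => ?_
    have := hne k (Finset.ne_of_mem_erase hk)
    simp only [Lagrange.basisDivisor, hs, Polynomial.eval_mul, Polynomial.eval_C,
      Polynomial.eval_sub, Polynomial.eval_X]
    field_simp
    ring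
  set w : Polynomial ℝ := ∏ i, (Polynomial.X - Polynomial.C (ad.x i)) with hw
  have hwe : ∀ t, w.eval t = ∏ i, (t - ad.x i) := by
    intro t; simp [hw, Polynomial.eval_prod]
  obtain ⟨κ, hκ⟩ : ∃ κ : ℝ, B * (Polynomial.X - Polynomial.C (ad.x b)) = w * Polynomial.C κ := by
    refine ⟨∏ k ∈ Finset.univ.erase b, s k, ?_⟩
    rw [hB, Lagrange.basis, hw, ← Finset.mul_prod_erase _ _ (Finset.mem_univ b), map_prod]
    simp only [Lagrange.basisDivisor, Finset.prod_mul_distrib, hs]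
    ring
  have hPB : B * G = B + w * (Polynomial.C κ * r) := by
    have : G = 1 + (Polynomial.X - Polynomial.C (ad.x b)) * r := by rw [← hr]; ring
    rw [this, mul_add, mul_one, ← mul_assoc, hκ, mul_assoc]
  have horth : ∫ t, (w * (Polynomial.C κ * r)).eval t ∂μ₁ = 0 := by
    refine ang_orth μ₁ hmom₁ w _ n ?_ (lt_of_le_of_lt (Polynomial.natDegree_C_mul_le _ _) hrd)
    intro k hk
    simp_rw [hwe]
    exact ad.orth1 k hk
  have hq : qweight ad μ₁ b = ∫ t, (B * G).eval t ∂μ₁ := by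
    rw [hPB]
    simp_rw [Polynomial.eval_add]
    rw [integral_add (ang_int μ₁ hmom₁ _) (ang_int μ₁ hmom₁ _), horth, add_zero]
    rfl
  rw [hq]
  have hI : (μ₁ (Set.Icc (ad.x a) (ad.x c))).toReal =
      ∫ t, (Set.Icc (ad.x a) (ad.x c)).indicator (fun _ => (1 : ℝ)) t ∂μ₁ := by
    rw [integral_indicator measurableSet_Icc]
    simp [Measure.real]
  rw [hI]
  refine integral_mono_ae (ang_int μ₁ hmom₁ _)
    ((integrable_const (1 : ℝ)).indicator measurableSet_Icc) ?_
  have hae : ∀ᵐ t ∂μ₁, t ∈ Set.Icc a₁ b₁ := by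
    rw [ae_iff]; exact hsupp₁
  filter_upwards [hae] with t ht
  have hPe : (B * G).eval t =
      ((1 + s a * (t - ad.x b)) * (1 + s c * (t - ad.x b)) *
        ((1 + γ * (t - ad.x b)) * (1 + δ * (t - ad.x b)))) *
          ((∏ k ∈ A, (1 + s k * (t - ad.x b))) ^ 2 * ∏ k ∈ Y, (1 + s k * (t - ad.x b))) := by
    rw [Polynomial.eval_mul, hBe, hU, Finset.prod_insert haAY, Finset.prod_insert hcAY,
      Finset.prod_union hAY, hG, Polynomial.eval_mul, Polynomial.eval_mul, Polynomial.eval_prod]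
    simp only [fe]
    ring
  have sform : ∀ k, k ≠ b → 1 + s k * (t - ad.x b) = (t - ad.x k) / (ad.x b - ad.x k) := by
    intro k hk
    have := hne k hk
    simp only [hs]
    field_simp
    ring
  have hbm : ad.x b ∈ Set.Ioo a₁ b₁ := ad.mem1 b (by simp [hb]; omega)
  have hYnn : ∀ k ∈ Y, 0 ≤ 1 + s k * (t - ad.x b) := by
    intro k hk
    have hk' : n ≤ (k : ℕ) := by simpa [hY] using hk
    have h2 := ad.mem2 k hk'
    rw [sform k (by rintro rfl; simp [hb] at hk'; omega)]
    exact div_nonneg_of_nonpos (by linarith [ht.2, h2.1]) (by linarith [hbm.2, h2.1])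
  rw [hPe]
  have HH := H (t - ad.x b) hYnn
  rw [Set.indicator_apply]
  split_ifs with hmem
  · refine HH.1 ?_ ?_ ?_
    · rw [sform a hab']; exact div_nonneg (by linarith [hmem.1]) (by linarith)
    · rw [sform c hcb']; exact div_nonneg_of_nonpos (by linarith [hmem.2]) (by linarith)
    · intro k hk
      have hk' : k ≠ c ∧ k ≠ b ∧ k ≠ a := by
        simp only [hA, Finset.mem_erase] at hk; tauto
      rw [sform k hk'.2.1]
      have : k < a ∨ c < k := by
        have h1 := hk'.1
        have h2 := hk'.2.1
        have h3 := hk'.2.2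
        simp only [ha, hb, hc, ne_eq, Fin.ext_iff, Fin.lt_def] at h1 h2 h3 ⊢
        omega
      rcases this with h | h
      · have := ad.mono h
        exact div_nonneg (by linarith [hmem.1]) (by linarith)
      · have := ad.mono h
        exact div_nonneg_of_nonpos (by linarith [hmem.2]) (by linarith)
  · refine HH.2 ?_
    rw [Set.mem_Icc, not_and_or, not_le, not_le] at hmem
    rcases hmem with h | h
    · left; rw [sform a hab']; exact div_neg_of_neg_of_pos (by linarith) (by linarith)
    · right; rw [sform c hcb']; exact div_neg_of_pos_of_neg (by linarith) (by linarith)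
end

section
/- For every n ≥ 3 and every 2 ≤ ℓ ≤ n − 1, one has λ_{ℓ,2n}^{(1)} + λ_{ℓ+1,2n}^{(1)} ≥ μ₁([x_{ℓ,2n}, x_{ℓ+1,2n}]). -/
open MeasureTheory

open Polynomial

inductive AngAM (M : ℝ) : (ℝ → ℝ) → Prop
  | const (c : ℝ) (hc : 0 ≤ c) : AngAM M (fun _ => c)
  | add (f g : ℝ → ℝ) : AngAM M f → AngAM M g → AngAM M (fun x => f x + g x)
  | mul (f g : ℝ → ℝ) : AngAM M f → AngAM M g → AngAM M (fun x => f x * g x)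
  | inv (z : ℝ) (hz : M ≤ z) : AngAM M (fun x => (z - x)⁻¹)

lemma AngAM.nonneg {M : ℝ} {f : ℝ → ℝ} (h : AngAM M f) : ∀ x < M, 0 ≤ f x := by
  induction h with
  | const c hc => intro x _; exact hc
  | add f g _ _ h1 h2 => intro x hx; exact add_nonneg (h1 x hx) (h2 x hx)
  | mul f g _ _ h1 h2 => intro x hx; exact mul_nonneg (h1 x hx) (h2 x hx)
  | inv z hz => intro x hx; exact inv_nonneg.2 (by linarith)

lemma AngAM.diff {M : ℝ} {f : ℝ → ℝ} (h : AngAM M f) (t : ℝ) (ht : t < M) :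
    ∃ f', AngAM M f' ∧ ∀ x < M, f x = f t + (x - t) * f' x := by
  induction h with
  | const c hc => exact ⟨fun _ => 0, .const 0 le_rfl, fun x _ => by simp⟩
  | add f g _ _ h1 h2 =>
    obtain ⟨f', a, b⟩ := h1
    obtain ⟨g', c, d⟩ := h2
    refine ⟨_, .add _ _ a c, fun x hx => ?_⟩
    simp only []
    rw [b x hx, d x hx]; ring
  | mul f g hf hg h1 h2 =>
    obtain ⟨f', a, b⟩ := h1
    obtain ⟨g', c, d⟩ := h2
    refine ⟨_, .add _ _ (.mul _ _ a hg) (.mul _ _ (.const (f t) (hf.nonneg t ht)) c),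
      fun x hx => ?_⟩
    simp only []
    have e1 := b x hx
    have e2 := d x hx
    linear_combination g x * e1 + f t * e2
  | inv z hz =>
    refine ⟨_, .mul _ _ (.const (z - t)⁻¹ (inv_nonneg.2 (by linarith))) (.inv z hz),
      fun x hx => ?_⟩
    have h1 : z - t ≠ 0 := by linarith
    have h2 : z - x ≠ 0 := by linarith
    field_simp
    ring

lemma AngAM.newton {M : ℝ} (t : Multiset ℝ) : (∀ s ∈ t, s < M) → ∀ f : ℝ → ℝ, AngAM M f →
    ∃ S : ℝ[X], ∃ E, AngAM M E ∧ S.degree < (Multiset.card t : ℕ) ∧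
      (∀ x < M, f x = S.eval x + E x * (t.map (fun s => x - s)).prod) ∧
      (∀ x, (∀ s ∈ t, s ≤ x) → 0 ≤ S.eval x) := by
  induction t using Multiset.induction with
  | empty =>
    intro _ f hf
    exact ⟨0, f, hf, by simp, by simp, by simp⟩
  | cons a t ih =>
    intro ht f hf
    have ha : a < M := ht a (by simp)
    obtain ⟨f', hf', he⟩ := hf.diff a ha
    obtain ⟨S, E, hE, hd, h1, h2⟩ := ih (fun s hs => ht s (by simp [hs])) f' hf'
    refine ⟨C (f a) + (X - C a) * S, E, hE, ?_, ?_, ?_⟩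
    · refine lt_of_le_of_lt (degree_add_le _ _) (max_lt ?_ ?_)
      · refine lt_of_le_of_lt degree_C_le ?_
        simp only [Multiset.card_cons]
        exact_mod_cast Nat.succ_pos _
      · rw [degree_mul, degree_X_sub_C, Multiset.card_cons]
        by_cases hS : S = 0
        · simp only [hS, degree_zero, WithBot.add_bot]; exact WithBot.bot_lt_coe _
        · rw [degree_eq_natDegree hS] at hd ⊢
          norm_cast at hd ⊢
          omega
    · intro x hx
      simp only [eval_add, eval_C, eval_mul, eval_sub, eval_X, Multiset.map_cons,
        Multiset.prod_cons]
      rw [he x hx, h1 x hx]; ring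
    · intro x hx
      simp only [eval_add, eval_C, eval_mul, eval_sub, eval_X]
      have := h2 x (fun s hs => hx s (by simp [hs]))
      have h3 := hx a (by simp)
      have := hf.nonneg a ha
      have h4 : 0 ≤ x - a := by linarith
      positivity

lemma AngAM.ofMultiset {M : ℝ} (z : Multiset ℝ) : (∀ s ∈ z, M ≤ s) →
    AngAM M (fun x => ((z.map (fun s => s - x)).prod)⁻¹) := by
  induction z using Multiset.induction with
  | empty => intro _; simpa using AngAM.const (M := M) 1 zero_le_one
  | cons a z ih =>
    intro h
    simp only [Multiset.map_cons, Multiset.prod_cons, mul_inv]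
    exact .mul _ _ (.inv a (h a (by simp))) (ih (fun s hs => h s (by simp [hs])))

lemma ang_core (M : ℝ) (z t : Multiset ℝ) (hz : ∀ s ∈ z, M ≤ s) (ht : ∀ s ∈ t, s < M) :
    ∃ P : ℝ[X], P.degree < (Multiset.card t + Multiset.card z : ℕ) ∧
      (∀ s ∈ z, P.eval s = 0) ∧ (∀ s ∈ t, P.eval s = 1) ∧
      (∀ x < M, ∃ E, 0 ≤ E ∧ 1 - P.eval x = E * (t.map (fun s => x - s)).prod) ∧
      (∀ x, (∀ s ∈ t, s ≤ x) → ∃ S, 0 ≤ S ∧ P.eval x = S * (z.map (fun s => s - x)).prod) := by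
  obtain ⟨S, E, hE, hd, h1, h2⟩ := AngAM.newton t ht _ (AngAM.ofMultiset z hz)
  have hev : ∀ x, ((z.map (fun s => C s - X)).prod : ℝ[X]).eval x
      = (z.map (fun s => s - x)).prod := by
    intro x
    rw [eval_multiset_prod, Multiset.map_map]
    simp [Function.comp_def]
  have hdeg : ((z.map (fun s => C s - X)).prod : ℝ[X]).degree ≤ (Multiset.card z : ℕ) := by
    clear hev h1 h2 hE hd hz
    induction z using Multiset.induction with
    | empty => simp
    | cons a z ih =>
      simp only [Multiset.map_cons, Multiset.prod_cons, Multiset.card_cons]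
      refine (degree_mul_le _ _).trans ?_
      have : (C a - X : ℝ[X]).degree ≤ 1 := by
        refine (degree_sub_le _ _).trans (max_le (degree_C_le.trans (by norm_num)) degree_X_le)
      refine (add_le_add this ih).trans ?_
      push_cast; rw [add_comm]
  have hpos : ∀ x < M, (z.map (fun s => s - x)).prod ≠ 0 := by
    intro x hx h0
    rw [Multiset.prod_eq_zero_iff, Multiset.mem_map] at h0
    obtain ⟨s, hs, h⟩ := h0
    have := hz s hs
    linarith
  have hpos' : ∀ x < M, 0 ≤ (z.map (fun s => s - x)).prod := by
    intro x hx
    apply Multiset.prod_nonneg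
    intro a ha
    rw [Multiset.mem_map] at ha
    obtain ⟨s, hs, h⟩ := ha
    have := hz s hs
    linarith
  have key : ∀ x < M, ∃ E, 0 ≤ E ∧
      1 - (S * (z.map (fun s => C s - X)).prod).eval x = E * (t.map (fun s => x - s)).prod := by
    intro x hx
    refine ⟨E x * (z.map (fun s => s - x)).prod, mul_nonneg (hE.nonneg x hx) (hpos' x hx), ?_⟩
    have := h1 x hx
    have h0 := hpos x hx
    rw [eval_mul, hev]
    have h3 : 1 = (S.eval x + E x * (t.map (fun s => x - s)).prod)
        * (z.map (fun s => s - x)).prod := by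
      rw [← this]; simp [h0]
    linear_combination h3
  refine ⟨S * (z.map (fun s => C s - X)).prod, ?_, ?_, ?_, key, ?_⟩
  · by_cases hS : S = 0
    · simp only [hS, zero_mul, degree_zero]; exact WithBot.bot_lt_coe _
    rw [degree_mul]
    rw [degree_eq_natDegree hS] at hd ⊢
    refine lt_of_le_of_lt (add_le_add le_rfl hdeg) ?_
    norm_cast at hd ⊢
    omega
  · intro s hs
    rw [eval_mul, hev]
    have : (z.map (fun r => r - s)).prod = 0 := by
      rw [Multiset.prod_eq_zero_iff, Multiset.mem_map]
      exact ⟨s, hs, by simp⟩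
    rw [this, mul_zero]
  · intro s hs
    obtain ⟨E', _, h⟩ := key s (ht s hs)
    have : (t.map (fun r => s - r)).prod = 0 := by
      rw [Multiset.prod_eq_zero_iff, Multiset.mem_map]
      exact ⟨s, hs, by simp⟩
    rw [this, mul_zero] at h
    linarith
  · intro x hx
    exact ⟨S.eval x, h2 x hx, by rw [eval_mul, hev]⟩

lemma ang_integrable (μ : Measure ℝ) (hmom : ∀ k : ℕ, Integrable (fun t : ℝ => t ^ k) μ)
    (P : ℝ[X]) : Integrable (fun t => P.eval t) μ := by
  simp only [eval_eq_sum_range]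
  exact integrable_finsetSum _ (fun i _ => (hmom i).const_mul _)

lemma ang_quad {μ₁ μ₂ : Measure ℝ} {a₁ b₁ a₂ b₂ : ℝ} {n : ℕ}
    (hmom₁ : ∀ k : ℕ, Integrable (fun t : ℝ => t ^ k) μ₁)
    (ad : Angelesco μ₁ μ₂ a₁ b₁ a₂ b₂ n) (P : ℝ[X]) (hP : P.degree < (3 * n : ℕ)) :
    ∫ t, P.eval t ∂μ₁ = ∑ k, P.eval (ad.x k) * qweight ad μ₁ k := by
  set N := Lagrange.nodal Finset.univ ad.x with hN
  have hmonic : N.Monic := Lagrange.nodal_monic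
  have hNd : N.natDegree = 2 * n := by
    rw [hN, Lagrange.natDegree_nodal]; simp
  have hNev : ∀ t, N.eval t = ∏ i, (t - ad.x i) := fun t => Lagrange.eval_nodal
  have hinj : Set.InjOn ad.x (Finset.univ : Finset (Fin (2 * n))) :=
    ad.mono.injective.injOn
  have hrem : P %ₘ N = Lagrange.interpolate Finset.univ ad.x (fun k => P.eval (ad.x k)) := by
    apply Lagrange.eq_interpolate_of_eval_eq _ hinj
    · have := degree_modByMonic_lt P hmonic
      rw [degree_eq_natDegree hmonic.ne_zero, hNd] at this
      simpa using this
    · intro i _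
      have h := congrArg (eval (ad.x i)) (modByMonic_add_div P N)
      rw [eval_add, eval_mul, hN, Lagrange.eval_nodal_at_node (Finset.mem_univ i)] at h
      simpa using h
  have hW : ∫ t, (N * (P /ₘ N)).eval t ∂μ₁ = 0 := by
    have hWd : (P /ₘ N).natDegree < n ∨ P /ₘ N = 0 := by
      by_cases h0 : P /ₘ N = 0
      · exact Or.inr h0
      left
      have hP0 : P ≠ 0 := by rintro rfl; simp at h0
      rw [natDegree_divByMonic _ hmonic, hNd]
      rw [degree_eq_natDegree hP0] at hP
      norm_cast at hP
      have : ¬ P.degree < N.degree := fun h => h0 ((divByMonic_eq_zero_iff hmonic).2 h)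
      by_contra hc
      omega
    rcases hWd with h | h
    · have : ∀ t, (N * (P /ₘ N)).eval t = ∑ k ∈ Finset.range ((P /ₘ N).natDegree + 1),
          (P /ₘ N).coeff k * ((∏ i, (t - ad.x i)) * t ^ k) := by
        intro t
        rw [eval_mul, hNev, eval_eq_sum_range, Finset.mul_sum]
        exact Finset.sum_congr rfl (fun k _ => by ring)
      simp only [this]
      rw [integral_finsetSum]
      · apply Finset.sum_eq_zero
        intro k hk
        rw [integral_const_mul, ad.orth1 k (by simp at hk; omega), mul_zero]
      · intro k _
        apply Integrable.const_mul
        have := ang_integrable μ₁ hmom₁ (N * X ^ k)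
        simpa [hNev] using this
    · simp [h]
  have h1 : ∀ t, P.eval t = (∑ k, P.eval (ad.x k) * (Lagrange.basis Finset.univ ad.x k).eval t)
      + (N * (P /ₘ N)).eval t := by
    intro t
    have h := congrArg (eval t) (modByMonic_add_div P N)
    rw [eval_add, hrem, Lagrange.interpolate_apply, eval_finset_sum] at h
    simpa using h.symm
  have hI : ∀ k, Integrable (fun t => P.eval (ad.x k) *
      (Lagrange.basis Finset.univ ad.x k).eval t) μ₁ :=
    fun k => (ang_integrable μ₁ hmom₁ _).const_mul _
  rw [integral_congr_ae (Filter.Eventually.of_forall h1), integral_add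
    (integrable_finsetSum _ (fun k _ => hI k)) (ang_integrable μ₁ hmom₁ _), hW, add_zero,
    integral_finsetSum _ (fun k _ => hI k)]
  exact Finset.sum_congr rfl (fun k _ => integral_const_mul _ _)

lemma ang_poly (n : ℕ) (y : ℕ → ℝ) (hy : ∀ i j, i < j → j < 2 * n → y i < y j) (b : ℝ)
    (hb : ∀ i, n ≤ i → i < 2 * n → b < y i) (ℓ : ℕ) (h1 : 2 ≤ ℓ) (h2 : ℓ < n) :
    ∃ Q : ℝ[X], Q.degree < (3 * n : ℕ) ∧ (∀ i < 2 * n, Q.eval (y i) =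
      if i = ℓ - 1 ∨ i = ℓ then 1 else 0) ∧ (∀ x ≤ b, 0 ≤ Q.eval x) ∧
      (∀ x ≤ b, y (ℓ - 1) ≤ x → x ≤ y ℓ → 1 ≤ Q.eval x) := by
  let F : ℕ → ℕ → Multiset ℝ := fun i j => (Finset.Ico i j).val.map y
  have hF : ∀ i j s, s ∈ F i j ↔ ∃ k, (i ≤ k ∧ k < j) ∧ y k = s := by
    intro i j s; simp [F]
  have hFc : ∀ i j, Multiset.card (F i j) = j - i := by intro i j; simp [F]
  have hle : ∀ i j, i ≤ j → j < 2 * n → y i ≤ y j := by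
    intro i j hij hj
    rcases hij.lt_or_eq with h | h
    · exact (hy i j h hj).le
    · rw [h]
  have hq : ∀ x ≤ b, 0 ≤ ((F n (2 * n)).map (fun s => s - x)).prod := by
    intro x hx
    apply Multiset.prod_nonneg
    intro a ha
    rw [Multiset.mem_map] at ha
    obtain ⟨s, hs, h⟩ := ha
    obtain ⟨k, hk, rfl⟩ := (hF _ _ _).1 hs
    have := hb k hk.1 hk.2
    linarith
  obtain ⟨P, Pd, Pz, Pt, Pl, Pr⟩ := ang_core (y (ℓ + 1))
    (F (ℓ + 1) n + F (ℓ + 1) n + F n (2 * n)) (F 0 ℓ + F 0 ℓ + {y ℓ})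
    (by
      intro s hs
      simp only [Multiset.mem_add, hF] at hs
      rcases hs with (⟨k, hk, rfl⟩ | ⟨k, hk, rfl⟩) | ⟨k, hk, rfl⟩ <;>
      exact hle _ _ (by omega) (by omega))
    (by
      intro s hs
      simp only [Multiset.mem_add, hF, Multiset.mem_singleton] at hs
      rcases hs with (⟨k, hk, rfl⟩ | ⟨k, hk, rfl⟩) | rfl <;>
      exact hy _ _ (by omega) (by omega))
  obtain ⟨R, Rd, Rz, Rt, Rl, Rr⟩ := ang_core (y (ℓ - 1))
    (F ℓ n + F ℓ n + F n (2 * n) + {y (ℓ - 1)}) (F 0 (ℓ - 1) + F 0 (ℓ - 1))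
    (by
      intro s hs
      simp only [Multiset.mem_add, hF, Multiset.mem_singleton] at hs
      rcases hs with ((⟨k, hk, rfl⟩ | ⟨k, hk, rfl⟩) | ⟨k, hk, rfl⟩) | rfl <;>
      exact hle _ _ (by omega) (by omega))
    (by
      intro s hs
      simp only [Multiset.mem_add, hF] at hs
      rcases hs with (⟨k, hk, rfl⟩ | ⟨k, hk, rfl⟩) <;>
      exact hy _ _ (by omega) (by omega))
  simp only [Multiset.mem_add, hF, Multiset.mem_singleton, Multiset.card_add, hFc,
    Multiset.card_singleton, Multiset.map_add, Multiset.prod_add, Multiset.map_singleton,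
    Multiset.prod_singleton] at Pd Pz Pt Pl Pr Rd Rz Rt Rl Rr
  have P1 : ∀ x ≤ y ℓ, 1 ≤ P.eval x := by
    intro x hx
    obtain ⟨E, hE, h⟩ := Pl x (lt_of_le_of_lt hx (hy _ _ (by omega) (by omega)))
    have := mul_nonneg (mul_nonneg hE (mul_self_nonneg ((F 0 ℓ).map (fun s => x - s)).prod))
      (sub_nonneg.2 hx)
    nlinarith
  have P0 : ∀ x ≤ b, 0 ≤ P.eval x := by
    intro x hx
    rcases le_total x (y ℓ) with h | h
    · linarith [P1 x h]
    · obtain ⟨S, hS, e⟩ := Pr x (by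
        rintro s ((⟨k, hk, rfl⟩ | ⟨k, hk, rfl⟩) | rfl)
        · exact (hle k ℓ (by omega) (by omega)).trans h
        · exact (hle k ℓ (by omega) (by omega)).trans h
        · exact h)
      rw [e]
      exact mul_nonneg hS (mul_nonneg (mul_self_nonneg _) (hq x hx))
  have R0 : ∀ x ≤ b, y (ℓ - 1) ≤ x → R.eval x ≤ 0 := by
    intro x hx h
    obtain ⟨S, hS, e⟩ := Rr x (by
        rintro s (⟨k, hk, rfl⟩ | ⟨k, hk, rfl⟩) <;>
        exact (hle k (ℓ - 1) (by omega) (by omega)).trans h)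
    rw [e]
    have := mul_nonneg hS (mul_nonneg (mul_nonneg
      (mul_self_nonneg ((F ℓ n).map (fun s => s - x)).prod) (hq x hx)) (sub_nonneg.2 h))
    nlinarith
  have R1 : ∀ x < y (ℓ - 1), R.eval x ≤ 1 := by
    intro x hx
    obtain ⟨E, hE, h⟩ := Rl x hx
    have := mul_nonneg hE (mul_self_nonneg ((F 0 (ℓ - 1)).map (fun s => x - s)).prod)
    linarith
  refine ⟨P - R, ?_, ?_, ?_, ?_⟩
  · refine lt_of_le_of_lt (degree_sub_le _ _) (max_lt (Pd.trans_le ?_) (Rd.trans_le ?_)) <;>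
    · norm_cast; omega
  · intro i hi
    rw [eval_sub]
    rcases lt_trichotomy i (ℓ - 1) with h | h | h
    · rw [Pt _ (Or.inl (Or.inl ⟨i, by omega, rfl⟩)), Rt _ (Or.inl ⟨i, by omega, rfl⟩),
        if_neg (by omega), sub_self]
    · rw [Pt _ (Or.inl (Or.inl ⟨i, by omega, rfl⟩)), Rz _ (Or.inr (by rw [h])),
        if_pos (by omega), sub_zero]
    · have hR : R.eval (y i) = 0 := by
        rcases lt_or_ge i n with h' | h'
        · exact Rz _ (Or.inl (Or.inl (Or.inl ⟨i, by omega, rfl⟩)))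
        · exact Rz _ (Or.inl (Or.inr ⟨i, by omega, rfl⟩))
      rw [hR, sub_zero]
      by_cases hl : i = ℓ
      · rw [Pt _ (Or.inr (by rw [hl])), if_pos (by omega)]
      · rw [if_neg (by omega)]
        rcases lt_or_ge i n with h' | h'
        · exact Pz _ (Or.inl (Or.inl ⟨i, by omega, rfl⟩))
        · exact Pz _ (Or.inr ⟨i, by omega, rfl⟩)
  · intro x hx
    rw [eval_sub]
    rcases lt_or_ge x (y (ℓ - 1)) with h | h
    · have := P1 x (h.le.trans (hle _ _ (by omega) (by omega)))
      linarith [R1 x h]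
    · linarith [P0 x hx, R0 x hx h]
  · intro x hx h h'
    rw [eval_sub]
    linarith [P1 x h', R0 x hx h]

/-- **Lower bound for the sum of two consecutive positive quadrature weights.**
For `2 ≤ ℓ ≤ n − 1` one has `λ_{ℓ,2n}^{(1)} + λ_{ℓ+1,2n}^{(1)} ≥ μ₁([x_{ℓ,2n}, x_{ℓ+1,2n}])`
(nodes are `1`-based, so `x_{ℓ,2n}` is `ad.x ⟨ℓ-1,_⟩`). -/
theorem angelesco_consecutive_weights_lower_bound
    (μ₁ μ₂ : Measure ℝ) [IsFiniteMeasure μ₁] [IsFiniteMeasure μ₂]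
    (a₁ b₁ a₂ b₂ : ℝ) (hab₁ : a₁ < b₁) (hgap : b₁ ≤ a₂) (hab₂ : a₂ < b₂)
    (hsupp₁ : μ₁ (Set.Icc a₁ b₁)ᶜ = 0) (hsupp₂ : μ₂ (Set.Icc a₂ b₂)ᶜ = 0)
    (hinf₁ : ∀ s : Finset ℝ, μ₁ ((s : Set ℝ))ᶜ ≠ 0)
    (hinf₂ : ∀ s : Finset ℝ, μ₂ ((s : Set ℝ))ᶜ ≠ 0)
    (hmom₁ : ∀ k : ℕ, Integrable (fun t : ℝ => t ^ k) μ₁)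
    (hmom₂ : ∀ k : ℕ, Integrable (fun t : ℝ => t ^ k) μ₂)
    (n : ℕ) (hn : 3 ≤ n) (ad : Angelesco μ₁ μ₂ a₁ b₁ a₂ b₂ n)
    (ℓ : ℕ) (hℓ₁ : 2 ≤ ℓ) (hℓ₂ : ℓ ≤ n - 1) :
    (μ₁ (Set.Icc (ad.x ⟨ℓ - 1, by omega⟩) (ad.x ⟨ℓ, by omega⟩))).toReal ≤
      qweight ad μ₁ ⟨ℓ - 1, by omega⟩ + qweight ad μ₁ ⟨ℓ, by omega⟩ := by
  let y : ℕ → ℝ := fun i => if h : i < 2 * n then ad.x ⟨i, h⟩ else 0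
  have hyx : ∀ i (h : i < 2 * n), y i = ad.x ⟨i, h⟩ := fun i h => dif_pos h
  obtain ⟨Q, Qd, Qv, Q0, Q1⟩ := ang_poly n y
    (by
      intro i j hij hj
      rw [hyx i (by omega), hyx j hj]
      exact ad.mono (by simpa using hij)) b₁
    (by
      intro i hi hi'
      rw [hyx i hi']
      exact lt_of_le_of_lt hgap (ad.mem2 _ hi).1) ℓ hℓ₁ (by omega)
  rw [hyx (ℓ - 1) (by omega), hyx ℓ (by omega)] at Q1
  have hq := ang_quad hmom₁ ad Q Qd
  have hsum : ∑ k, Q.eval (ad.x k) * qweight ad μ₁ k =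
      qweight ad μ₁ ⟨ℓ - 1, by omega⟩ + qweight ad μ₁ ⟨ℓ, by omega⟩ := by
    have hne : (⟨ℓ - 1, by omega⟩ : Fin (2 * n)) ≠ ⟨ℓ, by omega⟩ := by
      intro h; simp at h; omega
    rw [← Finset.sum_pair hne]
    symm
    rw [← Finset.sum_subset (Finset.subset_univ
      ({⟨ℓ - 1, by omega⟩, ⟨ℓ, by omega⟩} : Finset (Fin (2 * n))))]
    · apply Finset.sum_congr rfl
      intro k hk
      have h := Qv k k.2
      rw [hyx k k.2, if_pos (by simpa [Fin.ext_iff] using hk)] at h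
      rw [show ad.x k = ad.x ⟨k, k.2⟩ from rfl, h, one_mul]
    · intro k _ hk
      have h := Qv k k.2
      rw [hyx k k.2, if_neg (by simpa [Fin.ext_iff] using hk)] at h
      rw [show ad.x k = ad.x ⟨k, k.2⟩ from rfl, h, zero_mul]
  rw [← hsum, ← hq]
  have hae : ∀ᵐ t ∂μ₁, t ∈ Set.Icc a₁ b₁ := hsupp₁
  set I := Set.Icc (ad.x ⟨ℓ - 1, by omega⟩) (ad.x ⟨ℓ, by omega⟩) with hI
  have : (μ₁ I).toReal = ∫ t, I.indicator (fun _ => (1 : ℝ)) t ∂μ₁ := by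
    rw [integral_indicator measurableSet_Icc]
    simp [Measure.real, hI]
  rw [this]
  apply integral_mono_ae
  · exact (integrable_const _).indicator measurableSet_Icc
  · exact ang_integrable μ₁ hmom₁ Q
  · filter_upwards [hae] with t ht
    by_cases hm : t ∈ I
    · rw [Set.indicator_of_mem hm]
      exact Q1 t ht.2 hm.1 hm.2
    · rw [Set.indicator_of_notMem hm]
      exact Q0 t ht.2
end

section
/- For every n ≥ 1, the sum of the quadrature weights of the first rule over the nodes lying in [a₁,b₁] is bounded by the total mass of μ₁: ∑_{k=1}^{n} λ_{k,2n}^{(1)} ≤ μ₁([a₁,b₁]). -/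
open MeasureTheory

open Polynomial in
/-- Newton-type cone of polynomials. -/
def NCone (y : ℕ → ℝ) (m : ℕ) (g : ℝ[X]) : Prop :=
  ∃ c : ℕ → ℝ, (∀ k, 0 ≤ c k) ∧
    g = ∑ k ∈ Finset.range m, C (c k) * ∏ i ∈ Finset.range k, (C (y i) - X)

open Polynomial in
lemma NCone.step {y : ℕ → ℝ} {m : ℕ} {g : ℝ[X]} (hg : NCone y m g) (x : ℝ)
    (hx : ∀ j, x < y j) :
    ∃ g', NCone y m g' ∧ ∀ j < m, (y j - x) * g'.eval (y j) = g.eval (y j) := by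
  obtain ⟨c, hc, rfl⟩ := hg
  let d : ℕ → ℝ := fun k => Nat.rec (c 0 / (y 0 - x))
    (fun k r => (c (k+1) + r) / (y (k+1) - x)) k
  have d0 : d 0 = c 0 / (y 0 - x) := rfl
  have ds : ∀ k, d (k+1) = (c (k+1) + d k) / (y (k+1) - x) := fun k => rfl
  have hd : ∀ k, 0 ≤ d k := by
    intro k
    induction k with
    | zero => rw [d0]; exact div_nonneg (hc 0) (sub_nonneg.2 (hx 0).le)
    | succ k ih =>
      rw [ds]; exact div_nonneg (add_nonneg (hc _) ih) (sub_nonneg.2 (hx _).le)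
  refine ⟨_, ⟨d, hd, rfl⟩, ?_⟩
  intro j hj
  have key : ∀ (t : ℝ) (m : ℕ),
      (t - x) * (∑ k ∈ Finset.range (m+1), d k * ∏ i ∈ Finset.range k, (y i - t)) =
      (∑ k ∈ Finset.range (m+1), c k * ∏ i ∈ Finset.range k, (y i - t))
        - d m * ∏ i ∈ Finset.range (m+1), (y i - t) := by
    intro t m
    induction m with
    | zero =>
      have h0 : y 0 - x ≠ 0 := (sub_pos.2 (hx 0)).ne'
      simp [d0]
      field_simp
      ring
    | succ m ih =>
      have h0 : y (m+1) - x ≠ 0 := (sub_pos.2 (hx (m+1))).ne'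
      have e : d (m+1) * (y (m+1) - x) = c (m+1) + d m := by
        rw [ds]; field_simp
      rw [Finset.sum_range_succ, mul_add, ih, Finset.sum_range_succ _ (m+1),
        Finset.prod_range_succ _ (m+1)]
      linear_combination (∏ i ∈ Finset.range (m+1), (y i - t)) * e
  obtain ⟨m, rfl⟩ : ∃ m', m = m' + 1 := ⟨m - 1, by omega⟩
  have := key (y j) m
  rw [Finset.prod_eq_zero (Finset.mem_range.2 hj) (sub_self _)] at this
  simpa [eval_finsetSum, eval_prod] using this

open Polynomial in
lemma NCone.exists_interp {ι : Type*} [DecidableEq ι] {y : ℕ → ℝ} {m : ℕ} (hm : 1 ≤ m) (x : ι → ℝ)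
    (s : Finset ι) (hx : ∀ i ∈ s, ∀ j, x i < y j) :
    ∃ g, NCone y m g ∧ ∀ j < m, (∏ i ∈ s, (y j - x i) ^ 2) * g.eval (y j) = 1 := by
  induction s using Finset.induction_on with
  | empty =>
    refine ⟨1, ⟨fun k => if k = 0 then 1 else 0, ?_, ?_⟩, by simp⟩
    · intro k; dsimp only; split_ifs <;> norm_num
    · obtain ⟨m, rfl⟩ : ∃ m', m = m' + 1 := ⟨m - 1, by omega⟩
      rw [Finset.sum_range_succ']
      simp
  | insert a s ha ih =>
    obtain ⟨g, hg, hgy⟩ := ih (fun i hi => hx i (Finset.mem_insert_of_mem hi))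
    obtain ⟨g1, hg1, h1⟩ := hg.step (x a) (hx a (Finset.mem_insert_self _ _))
    obtain ⟨g2, hg2, h2⟩ := hg1.step (x a) (hx a (Finset.mem_insert_self _ _))
    refine ⟨g2, hg2, fun j hj => ?_⟩
    rw [Finset.prod_insert ha, ← hgy j hj, ← h1 j hj, ← h2 j hj]
    ring

open Polynomial in
lemma NCone.eval_nonneg {y : ℕ → ℝ} {m : ℕ} {g : ℝ[X]} (hg : NCone y m g) (t : ℝ)
    (ht : ∀ j, t ≤ y j) : 0 ≤ g.eval t := by
  obtain ⟨c, hc, rfl⟩ := hg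
  simp only [eval_finsetSum, eval_mul, eval_C, eval_prod, eval_sub, eval_X]
  exact Finset.sum_nonneg fun k _ => mul_nonneg (hc k)
    (Finset.prod_nonneg fun i _ => sub_nonneg.2 (ht i))

open Polynomial in
lemma NCone.natDegree_le {y : ℕ → ℝ} {m : ℕ} {g : ℝ[X]} (hg : NCone y m g) :
    g.natDegree ≤ m - 1 := by
  obtain ⟨c, hc, rfl⟩ := hg
  refine natDegree_sum_le_of_forall_le _ _ fun k hk => ?_
  refine (natDegree_C_mul_le _ _).trans ((natDegree_prod_le _ _).trans ?_)
  have : ∑ i ∈ Finset.range k, (C (y i) - X : ℝ[X]).natDegree ≤ ∑ i ∈ Finset.range k, 1 :=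
    Finset.sum_le_sum fun i _ => (natDegree_sub_le _ _).trans (by simp)
  have hk' := Finset.mem_range.1 hk
  simp only [Finset.sum_const, Finset.card_range, smul_eq_mul, mul_one] at this
  omega

open Polynomial in
lemma poly_integrable {μ : Measure ℝ} (hmom : ∀ k : ℕ, Integrable (fun t : ℝ => t ^ k) μ)
    (p : ℝ[X]) : Integrable (fun t => p.eval t) μ := by
  simp only [eval_eq_sum_range]
  exact integrable_finset_sum _ fun k _ => (hmom k).const_mul _

open Polynomial in
theorem angelesco_aux
    (μ₁ μ₂ : Measure ℝ) [IsFiniteMeasure μ₁] [IsFiniteMeasure μ₂]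
    (a₁ b₁ a₂ b₂ : ℝ) (hab₁ : a₁ < b₁) (hgap : b₁ ≤ a₂) (hab₂ : a₂ < b₂)
    (hsupp₁ : μ₁ (Set.Icc a₁ b₁)ᶜ = 0) (hsupp₂ : μ₂ (Set.Icc a₂ b₂)ᶜ = 0)
    (hinf₁ : ∀ s : Finset ℝ, μ₁ ((s : Set ℝ))ᶜ ≠ 0)
    (hinf₂ : ∀ s : Finset ℝ, μ₂ ((s : Set ℝ))ᶜ ≠ 0)
    (hmom₁ : ∀ k : ℕ, Integrable (fun t : ℝ => t ^ k) μ₁)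
    (hmom₂ : ∀ k : ℕ, Integrable (fun t : ℝ => t ^ k) μ₂)
    (n : ℕ) (hn : 1 ≤ n) (ad : Angelesco μ₁ μ₂ a₁ b₁ a₂ b₂ n) :
    ∑ i ∈ Finset.univ.filter (fun i : Fin (2 * n) => (i : ℕ) < n), qweight ad μ₁ i ≤
      (μ₁ (Set.Icc a₁ b₁)).toReal := by
  classical
  let F : Finset (Fin (2*n)) := Finset.univ.filter (fun i : Fin (2 * n) => (i : ℕ) < n)
  let y : ℕ → ℝ := fun j => if h : j < n then ad.x ⟨n + j, by omega⟩ else b₂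
  have hy : ∀ j, a₂ < y j := by
    intro j
    by_cases h : j < n
    · simp only [y, h, dif_pos]
      exact (ad.mem2 ⟨n + j, by omega⟩ (by simp)).1
    · simp only [y, h, dif_neg, not_false_eq_true]; exact hab₂
  obtain ⟨g, hg, hgy⟩ := NCone.exists_interp (y := y) hn ad.x F (by
    intro i hi j
    have := (ad.mem1 i (Finset.mem_filter.1 hi).2).2
    linarith [hy j])
  let P : ℝ[X] := ∏ i ∈ F, (X - C (ad.x i)) ^ 2
  let S : ℝ[X] := ∑ i ∈ F, Lagrange.basis Finset.univ ad.x i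
  let N : ℝ[X] := ∏ i, (X - C (ad.x i))
  have hinj : Function.Injective ad.x := ad.mono.injective
  have hFc : F.card = n := by
    have : F.card = (Finset.range n).card := by
      refine Finset.card_bij (fun i _ => (i : ℕ)) ?_ ?_ ?_
      · intro i hi; exact Finset.mem_range.2 (Finset.mem_filter.1 hi).2
      · intro i _ j _ h; exact Fin.ext h
      · intro b hb
        have := Finset.mem_range.1 hb
        exact ⟨⟨b, by omega⟩, Finset.mem_filter.2 ⟨Finset.mem_univ _, this⟩, rfl⟩
    simpa using this
  have hSeval : ∀ k, S.eval (ad.x k) = if k ∈ F then 1 else 0 := by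
    intro k
    simp only [S, eval_finsetSum]
    rw [← Finset.sum_ite_eq' F k (fun _ => (1:ℝ))]
    refine Finset.sum_congr rfl fun i _ => ?_
    by_cases h : i = k
    · subst h
      simp [Lagrange.eval_basis_self hinj.injOn (Finset.mem_univ i)]
    · simp [h, Lagrange.eval_basis_of_ne h (Finset.mem_univ k)]
  have hdvd : N ∣ P * g + S - 1 := by
    refine Finset.prod_dvd_of_coprime ?_ ?_
    · intro i _ j _ hij
      exact pairwise_coprime_X_sub_C hinj hij
    · intro k _
      rw [dvd_iff_isRoot, IsRoot.def]
      simp only [eval_sub, eval_add, eval_mul, eval_one, hSeval, P, eval_prod, eval_pow, eval_X,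
        eval_C]
      by_cases hk : k ∈ F
      · rw [Finset.prod_eq_zero hk (by simp)]; simp [hk]
      · have hk' : n ≤ (k : ℕ) := by
          by_contra h
          exact hk (Finset.mem_filter.2 ⟨Finset.mem_univ _, not_le.1 h⟩)
        have hlt : (k : ℕ) - n < n := by omega
        have hyk : y (k - n) = ad.x k := by
          simp only [y, hlt, dif_pos]
          congr 1
          apply Fin.ext; simp; omega
        have := hgy (k - n) hlt
        rw [hyk] at this
        rw [this]; simp [hk]
  obtain ⟨h, hh⟩ := hdvd
  have hNm : N.Monic := monic_prod_of_monic _ _ fun i _ => monic_X_sub_C _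
  have hNd : N.natDegree = 2 * n := by
    have := natDegree_prod_of_monic Finset.univ (fun i => (X - C (ad.x i) : ℝ[X]))
      fun i _ => monic_X_sub_C _
    simpa [N] using this
  have hPd : P.natDegree ≤ 2 * n := by
    refine (natDegree_prod_le _ _).trans ?_
    have : ∑ i ∈ F, ((X - C (ad.x i)) ^ 2 : ℝ[X]).natDegree = ∑ i ∈ F, 2 :=
      Finset.sum_congr rfl fun i _ => by simp [natDegree_pow]
    rw [this]; simp [hFc, mul_comm]
  have hSd : S.natDegree ≤ 2 * n - 1 := by
    refine natDegree_sum_le_of_forall_le _ _ fun i _ => ?_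
    apply natDegree_le_of_degree_le
    rw [Lagrange.degree_basis hinj.injOn (Finset.mem_univ i)]
    simp
  have hdeg : h.natDegree < n := by
    by_cases h0 : h = 0
    · simp [h0]; omega
    have h1 : (N * h).natDegree = 2 * n + h.natDegree := by
      rw [hNm.natDegree_mul' h0, hNd]
    have h2 : (P * g + S - 1).natDegree ≤ 3 * n - 1 := by
      refine (natDegree_sub_le _ _).trans (max_le ((natDegree_add_le _ _).trans
        (max_le (natDegree_mul_le.trans ?_) ?_)) ?_)
      · have := hg.natDegree_le; omega
      · omega
      · simp
    rw [hh, h1] at h2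
    omega
  have horth : ∫ t, (N * h).eval t ∂μ₁ = 0 := by
    have e : ∀ t, (N * h).eval t =
        ∑ k ∈ Finset.range n, h.coeff k * ((∏ i, (t - ad.x i)) * t ^ k) := by
      intro t
      rw [eval_mul, eval_eq_sum_range' hdeg, Finset.mul_sum]
      refine Finset.sum_congr rfl fun k _ => ?_
      simp only [N, eval_prod, eval_sub, eval_X, eval_C]
      ring
    simp only [e]
    rw [integral_finset_sum]
    · refine Finset.sum_eq_zero fun k hk => ?_
      rw [integral_const_mul, ad.orth1 k (Finset.mem_range.1 hk), mul_zero]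
    · intro k _
      have := (poly_integrable hmom₁ (N * X ^ k)).const_mul (h.coeff k)
      simpa [N, eval_prod] using this
  have hS : ∑ i ∈ F, qweight ad μ₁ i = ∫ t, S.eval t ∂μ₁ := by
    simp only [S, eval_finsetSum, qweight]
    rw [integral_finset_sum _ fun i _ => poly_integrable hmom₁ _]
  have hpos : 0 ≤ ∫ t, (P * g).eval t ∂μ₁ := by
    refine integral_nonneg_of_ae ?_
    have hae : ∀ᵐ t ∂μ₁, t ∈ Set.Icc a₁ b₁ := hsupp₁
    filter_upwards [hae] with t ht
    simp only [Pi.zero_apply, eval_mul]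
    refine mul_nonneg ?_ (hg.eval_nonneg t fun j => by linarith [hy j, ht.2])
    simp only [P, eval_prod, eval_pow]
    exact Finset.prod_nonneg fun i _ => sq_nonneg _
  have hone : ∫ _t, (1:ℝ) ∂μ₁ = (μ₁ (Set.Icc a₁ b₁)).toReal := by
    rw [integral_const, smul_eq_mul, mul_one, measureReal_def]
    congr 1
    exact (measure_eq_measure_of_null_diff (Set.subset_univ _) (by
      simpa [Set.compl_eq_univ_diff] using hsupp₁)).symm
  have hsum : ∫ t, (N * h).eval t ∂μ₁ =
      ∫ t, (P * g).eval t ∂μ₁ + ∫ t, S.eval t ∂μ₁ - ∫ _t, (1:ℝ) ∂μ₁ := by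
    have e1 := integral_add (poly_integrable hmom₁ (P * g)) (poly_integrable hmom₁ S)
    have e2 := integral_sub (poly_integrable hmom₁ (P * g + S))
      (integrable_const (1:ℝ) (μ := μ₁))
    rw [← e1, ← hh]
    simpa using e2
  change ∑ i ∈ F, qweight ad μ₁ i ≤ _
  rw [hS, ← hone]
  linarith

/-- **The positive weights of the first rule sum to at most the total mass of `μ₁`:**
`∑_{k=1}^{n} λ_{k,2n}^{(1)} ≤ μ₁([a₁,b₁])`. -/
theorem angelesco_sum_positive_weights_le
    (μ₁ μ₂ : Measure ℝ) [IsFiniteMeasure μ₁] [IsFiniteMeasure μ₂]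
    (a₁ b₁ a₂ b₂ : ℝ) (hab₁ : a₁ < b₁) (hgap : b₁ ≤ a₂) (hab₂ : a₂ < b₂)
    (hsupp₁ : μ₁ (Set.Icc a₁ b₁)ᶜ = 0) (hsupp₂ : μ₂ (Set.Icc a₂ b₂)ᶜ = 0)
    (hinf₁ : ∀ s : Finset ℝ, μ₁ ((s : Set ℝ))ᶜ ≠ 0)
    (hinf₂ : ∀ s : Finset ℝ, μ₂ ((s : Set ℝ))ᶜ ≠ 0)
    (hmom₁ : ∀ k : ℕ, Integrable (fun t : ℝ => t ^ k) μ₁)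
    (hmom₂ : ∀ k : ℕ, Integrable (fun t : ℝ => t ^ k) μ₂)
    (n : ℕ) (hn : 1 ≤ n) (ad : Angelesco μ₁ μ₂ a₁ b₁ a₂ b₂ n) :
    ∑ i ∈ Finset.univ.filter (fun i : Fin (2 * n) => (i : ℕ) < n), qweight ad μ₁ i ≤
      (μ₁ (Set.Icc a₁ b₁)).toReal := by
  exact angelesco_aux μ₁ μ₂ a₁ b₁ a₂ b₂ hab₁ hgap hab₂ hsupp₁ hsupp₂ hinf₁ hinf₂ hmom₁ hmom₂ n hn ad
end
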